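/- Let d = 2 and assume the coordinate ordering condition, i.e. λ(i^{(2)}) < λ(i^{(1)}) for every i = (i_1,i_2) ∈ I_2. For a probability vector p on I_2 let q_p be the probability vector on I_1 given by q_p(i) = Σ_{j : (i,j)∈I_2} p(i,j), and note that χ_1(q_p) := −Σ_{i∈I_1} q_p(i)·log λ(i) equals χ_1(p). Then max_{p∈P(I_2)} [ H(p)/χ_2(p) + (1 − χ_1(p)/χ_2(p))·H(q_p)/χ_1(q_p) ] = s_2 if and only if Σ_{j=1}^{N(i)} λ(i,j)^{s_2−s_1} = 1 for every i ∈ I_1 (the uniform fibre condition). Here the left-hand side is the Gatzouras–Lalley variational formula for the Hausdorff dimension of the carpet, while s_2 is its box dimension. -/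

import Mathlib

open Real Finset Filter

noncomputable section

/-- Index sets of a Gatzouras–Lalley structure. -/
def glIdx (Nf : List ℕ → ℕ) : ℕ → Finset (List ℕ)
  | 0 => {[]}
  | n + 1 => (glIdx Nf n).biUnion fun u =>
      (Finset.range (Nf u)).image fun j => u ++ [j + 1]

/-- Entropy of a vector `p` on index set `I`. -/
def glEnt (I : Finset (List ℕ)) (p : List ℕ → ℝ) : ℝ :=
  -∑ i ∈ I, p i * Real.log (p i)

/-- Lyapunov exponent `χ_ℓ(p)` for `p` on index set `I`. -/
def glLyap (lam : List ℕ → ℝ) (I : Finset (List ℕ)) (ℓ : ℕ) (p : List ℕ → ℝ) : ℝ :=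
  -∑ i ∈ I, p i * Real.log (lam (i.take ℓ))

def IsProbVec (I : Finset (List ℕ)) (p : List ℕ → ℝ) : Prop :=
  (∀ i ∈ I, 0 ≤ p i) ∧ ∑ i ∈ I, p i = 1

/-- `glCaux d χ k = C^{(d)}_{d-k}`, defined by downward recursion. -/
def glCaux (d : ℕ) (chi : ℕ → ℕ → ℝ) : ℕ → ℝ
  | k => (1 - ∑ j ∈ (Finset.range k).attach,
        glCaux d chi j.1 * chi (d - k) (d - j.1)) / chi (d - k) (d - k)
decreasing_by exact Finset.mem_range.mp j.2

/-- The coefficient `C_n^{(d)}(P)`. -/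
def glC (d : ℕ) (lam : List ℕ → ℝ) (Nf : List ℕ → ℕ) (P : ℕ → List ℕ → ℝ) (n : ℕ) : ℝ :=
  glCaux d (fun a m => glLyap lam (glIdx Nf m) a (P m)) (d - n)

/-- Smallest number of sets of diameter at most `δ` needed to cover `Λ`. -/
def coverNum {E : Type*} [EMetricSpace E] (Λ : Set E) (δ : ℝ) : ℕ :=
  sInf {m : ℕ | ∃ U : Fin m → Set E,
    (∀ k, EMetric.diam (U k) ≤ ENNReal.ofReal δ) ∧ Λ ⊆ ⋃ k, U k}

/-- The affine map `S_i` of a Gatzouras–Lalley system. -/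
def glMap (d : ℕ) (lam t : List ℕ → ℝ) (i : List ℕ) (x : EuclideanSpace ℝ (Fin d)) :
    EuclideanSpace ℝ (Fin d) :=
  WithLp.toLp 2 fun k : Fin d => lam (i.take ((k : ℕ) + 1)) * x k + t (i.take ((k : ℕ) + 1))

def openCube (d : ℕ) : Set (EuclideanSpace ℝ (Fin d)) := {x | ∀ k, x k ∈ Set.Ioo (0:ℝ) 1}

def closedCube (d : ℕ) : Set (EuclideanSpace ℝ (Fin d)) := {x | ∀ k, x k ∈ Set.Icc (0:ℝ) 1}


/-- The marginal `q_p` on `I_1` of a probability vector `p` on `I_2`. -/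
def glMarg (Nf : List ℕ → ℕ) (p : List ℕ → ℝ) (u : List ℕ) : ℝ :=
  ∑ v ∈ (glIdx Nf 2).filter (fun v => v.take 1 = u), p v

/-!
Write `χ₁`, `χ₂` for the Lyapunov exponents of `p`, and `f_* p` for its marginal under
`f : I₂ → I₁`. The equations defining `s₁` and `s₂` say that `w₁ = λ₁ ^ s₁` and
`w₂ = λ₁ ^ s₁ * λ₂ ^ (s₂ - s₁)` are probability vectors, and the variational functional falls short
of `s₂` by exactly
`D(p ‖ w₂) / χ₂ + (1 - χ₁ / χ₂) * (D(f_* p ‖ w₁) / χ₁)`,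
where `D` is the relative entropy. Both terms are nonnegative by Gibbs' inequality, so by
compactness the supremum is `s₂` if and only if both vanish at some `p`. Since `χ₁ < χ₂`, this
forces `p = w₂` and `f_* w₂ = w₁`, and the latter equation is the uniform fibre condition.
-/

open InformationTheory (klFun klFun_nonneg klFun_eq_zero_iff)

section Entropy

variable {ι κ : Type*} [Fintype ι] [Fintype κ] {p w w' : ι → ℝ}

/-- The Shannon entropy `H(p)` of a finite probability vector. -/
def entropy (p : ι → ℝ) : ℝ :=
  ∑ i, negMulLog (p i)

/-- The cross entropy of `p` relative to positive weights `w`. When `w` consists of contraction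
ratios, this is the Lyapunov exponent of `p`. -/
def crossEntropy (p w : ι → ℝ) : ℝ :=
  -∑ i, p i * log (w i)

/-- The relative entropy (Kullback–Leibler divergence) `D(p ‖ w)` of `p` from positive weights
`w`. -/
def relEntropy (p w : ι → ℝ) : ℝ :=
  ∑ i, p i * log (p i / w i)

@[fun_prop]
lemma continuous_entropy : Continuous (entropy : (ι → ℝ) → ℝ) := by
  unfold entropy
  fun_prop

@[fun_prop]
lemma continuous_crossEntropy_left (w : ι → ℝ) : Continuous fun p => crossEntropy p w := by
  unfold crossEntropy
  fun_prop

lemma relEntropy_eq_crossEntropy_sub_entropy (hw : ∀ i, 0 < w i) :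
    relEntropy p w = crossEntropy p w - entropy p := by
  have hterm (i : ι) : p i * log (p i / w i) = -(p i * log (w i)) - negMulLog (p i) := by
    rcases eq_or_ne (p i) 0 with hpi | hpi
    · simp [hpi]
    · rw [log_div hpi (hw i).ne', negMulLog]
      ring
  simp only [relEntropy, crossEntropy, entropy, hterm, sum_sub_distrib, sum_neg_distrib]

lemma relEntropy_eq_sum_mul_klFun (hw : ∀ i, 0 < w i) (hpw : ∑ i, p i = ∑ i, w i) :
    relEntropy p w = ∑ i, w i * klFun (p i / w i) := by
  have hterm (i : ι) : w i * klFun (p i / w i) = p i * log (p i / w i) + (w i - p i) := by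
    have := (hw i).ne'
    rw [klFun]
    field_simp
    ring
  simp only [relEntropy, hterm, sum_add_distrib, sum_sub_distrib, hpw, sub_self, add_zero]

lemma relEntropy_nonneg (hp : ∀ i, 0 ≤ p i) (hw : ∀ i, 0 < w i)
    (hpw : ∑ i, p i = ∑ i, w i) : 0 ≤ relEntropy p w := by
  rw [relEntropy_eq_sum_mul_klFun hw hpw]
  exact sum_nonneg fun i _ => mul_nonneg (hw i).le (klFun_nonneg (div_nonneg (hp i) (hw i).le))

lemma relEntropy_eq_zero_iff (hp : ∀ i, 0 ≤ p i) (hw : ∀ i, 0 < w i)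
    (hpw : ∑ i, p i = ∑ i, w i) : relEntropy p w = 0 ↔ p = w := by
  have hdiv (i : ι) : 0 ≤ p i / w i := div_nonneg (hp i) (hw i).le
  rw [relEntropy_eq_sum_mul_klFun hw hpw,
    sum_eq_zero_iff_of_nonneg fun i _ => mul_nonneg (hw i).le (klFun_nonneg (hdiv i)), funext_iff]
  simp [(hw _).ne', klFun_eq_zero_iff (hdiv _), div_eq_one_iff_eq]

lemma crossEntropy_pos (hp : p ∈ stdSimplex ℝ ι) (hw : ∀ i, w i ∈ Set.Ioo 0 1) :
    0 < crossEntropy p w := by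
  have hlog (i : ι) : log (w i) < 0 := log_neg (hw i).1 (hw i).2
  obtain ⟨i, hi, hpi⟩ : ∃ i ∈ univ, p i ≠ 0 := exists_ne_zero_of_sum_ne_zero (by simp [hp.2])
  rw [crossEntropy, Left.neg_pos_iff]
  exact sum_neg' (fun j _ => mul_nonpos_of_nonneg_of_nonpos (hp.1 j) (hlog j).le)
    ⟨i, hi, mul_neg_of_pos_of_neg ((hp.1 i).lt_of_ne' hpi) (hlog i)⟩

lemma crossEntropy_le_crossEntropy (hp : ∀ i, 0 ≤ p i) (hw : ∀ i, 0 < w i) (hle : w ≤ w') :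
    crossEntropy p w' ≤ crossEntropy p w :=
  neg_le_neg <| sum_le_sum fun i _ =>
    mul_le_mul_of_nonneg_left (log_le_log (hw i) (hle i)) (hp i)

lemma crossEntropy_lt_crossEntropy (hp : ∀ i, 0 < p i) (hw : ∀ i, 0 < w i) (hlt : w < w') :
    crossEntropy p w' < crossEntropy p w := by
  obtain ⟨hle, i, hi⟩ := Pi.lt_def.1 hlt
  exact neg_lt_neg <| sum_lt_sum
    (fun j _ => mul_le_mul_of_nonneg_left (log_le_log (hw j) (hle j)) (hp j).le)
    ⟨i, mem_univ i, mul_lt_mul_of_pos_left (log_lt_log (hw i) hi) (hp i)⟩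

lemma crossEntropy_rpow (p : ι → ℝ) (hw : ∀ i, 0 < w i) (s : ℝ) :
    crossEntropy p (fun i => w i ^ s) = s * crossEntropy p w := by
  simp only [crossEntropy, log_rpow (hw _), mul_neg, mul_sum, mul_left_comm]

lemma crossEntropy_mul (p : ι → ℝ) (hw : ∀ i, 0 < w i) (hw' : ∀ i, 0 < w' i) :
    crossEntropy p (fun i => w i * w' i) = crossEntropy p w + crossEntropy p w' := by
  simp only [crossEntropy, log_mul (hw _).ne' (hw' _).ne', mul_add, sum_add_distrib, neg_add]

lemma crossEntropy_linearMap (f : ι → κ) (p : ι → ℝ) (a : κ → ℝ) :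
    crossEntropy (FunOnFinite.linearMap ℝ ℝ f p) a = crossEntropy p (a ∘ f) := by
  classical
  simp only [crossEntropy, FunOnFinite.linearMap_apply_apply, sum_mul, Function.comp_apply]
  rw [← sum_fiberwise univ f]
  congr! 3 with u _ v hv
  rw [(mem_filter.1 hv).2]

lemma linearMap_mem_stdSimplex (f : ι → κ) (hp : p ∈ stdSimplex ℝ ι) :
    FunOnFinite.linearMap ℝ ℝ f p ∈ stdSimplex ℝ κ :=
  stdSimplex.image_linearMap f (Set.mem_image_of_mem _ hp)

end Entropy

lemma sSup_image_eq_iff_exists_eq {X : Type*} [TopologicalSpace X] {K : Set X} {g : X → ℝ} {c : ℝ}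
    (hK : IsCompact K) (hne : K.Nonempty) (hg : ContinuousOn g K) (hle : ∀ x ∈ K, g x ≤ c) :
    sSup (g '' K) = c ↔ ∃ x ∈ K, g x = c := by
  refine ⟨fun h => h ▸ (hK.image_of_continuousOn hg).sSup_mem (hne.image g), ?_⟩
  rintro ⟨x, hx, rfl⟩
  exact IsGreatest.csSup_eq ⟨Set.mem_image_of_mem g hx, Set.forall_mem_image.2 hle⟩

section BoxWeight

variable {ι κ : Type*} {f : ι → κ} {a : κ → ℝ} {b : ι → ℝ} {s t : ℝ}

/-- The weights `λ₁ ^ s * λ₂ ^ (t - s)` on the rectangles of a carpet, where `f` sends a rectangle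
to its column, `a = λ₁` gives the widths of the columns and `b = λ₂` the heights of the rectangles.
They sum to `1` when `s = s₁` and `t = s₂`. -/
def boxWeight (f : ι → κ) (a : κ → ℝ) (b : ι → ℝ) (s t : ℝ) (v : ι) : ℝ :=
  a (f v) ^ s * b v ^ (t - s)

lemma boxWeight_pos (ha : ∀ u, 0 < a u) (hb : ∀ v, 0 < b v) (v : ι) : 0 < boxWeight f a b s t v :=
  mul_pos (rpow_pos_of_pos (ha _) _) (rpow_pos_of_pos (hb _) _)

lemma crossEntropy_boxWeight [Fintype ι] (p : ι → ℝ) (ha : ∀ u, 0 < a u) (hb : ∀ v, 0 < b v) :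
    crossEntropy p (boxWeight f a b s t) =
      s * crossEntropy p (a ∘ f) + (t - s) * crossEntropy p b := by
  rw [← crossEntropy_rpow p hb, ← crossEntropy_rpow p (w := a ∘ f) fun v => ha (f v)]
  exact crossEntropy_mul p (fun v => rpow_pos_of_pos (ha _) _) fun v => rpow_pos_of_pos (hb v) _

lemma linearMap_boxWeight_eq_iff [Fintype ι] [Finite κ] [DecidableEq κ] (ha : ∀ u, 0 < a u) :
    FunOnFinite.linearMap ℝ ℝ f (boxWeight f a b s t) = (fun u => a u ^ s) ↔
      ∀ u, ∑ v with f v = u, b v ^ (t - s) = 1 := by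
  have hmarginal (u : κ) : FunOnFinite.linearMap ℝ ℝ f (boxWeight f a b s t) u =
      a u ^ s * ∑ v with f v = u, b v ^ (t - s) := by
    rw [FunOnFinite.linearMap_apply_apply, mul_sum]
    refine sum_congr rfl fun v hv => ?_
    rw [boxWeight, (mem_filter.1 hv).2]
  simp only [funext_iff, hmarginal, mul_eq_left₀ (rpow_pos_of_pos (ha _) s).ne']

end BoxWeight

section LedrappierYoung

variable {ι κ : Type*} [Fintype ι] [Fintype κ] {f : ι → κ} {a : κ → ℝ} {b : ι → ℝ} {s t : ℝ}
  {p : ι → ℝ}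

/-- The Ledrappier–Young dimension of a Bernoulli measure with weights `p` on a carpet, that is, the
functional of the Gatzouras–Lalley variational formula. As in `boxWeight`, `f` sends a rectangle to
its column, `a` gives the widths of the columns and `b` the heights of the rectangles. -/
def ledrappierYoungDim (f : ι → κ) (a : κ → ℝ) (b p : ι → ℝ) : ℝ :=
  entropy p / crossEntropy p b +
    (1 - crossEntropy p (a ∘ f) / crossEntropy p b) *
      (entropy (FunOnFinite.linearMap ℝ ℝ f p) / crossEntropy (FunOnFinite.linearMap ℝ ℝ f p) a)

lemma continuousOn_ledrappierYoungDim (ha : ∀ u, a u ∈ Set.Ioo 0 1)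
    (hb : ∀ v, b v ∈ Set.Ioo 0 1) :
    ContinuousOn (ledrappierYoungDim f a b) (stdSimplex ℝ ι) := by
  have hmarginal : Continuous (FunOnFinite.linearMap ℝ ℝ f : (ι → ℝ) → κ → ℝ) :=
    FunOnFinite.continuous_linearMap ℝ ℝ f
  have hχ₁ (p) (hp : p ∈ stdSimplex ℝ ι) : crossEntropy (FunOnFinite.linearMap ℝ ℝ f p) a ≠ 0 :=
    (crossEntropy_pos (linearMap_mem_stdSimplex f hp) ha).ne'
  have hχ₂ (p) (hp : p ∈ stdSimplex ℝ ι) : crossEntropy p b ≠ 0 := (crossEntropy_pos hp hb).ne'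
  unfold ledrappierYoungDim
  fun_prop (disch := assumption)

lemma sub_ledrappierYoungDim (ha : ∀ u, 0 < a u) (hb : ∀ v, 0 < b v)
    (hχ₁ : crossEntropy p (a ∘ f) ≠ 0) (hχ₂ : crossEntropy p b ≠ 0) :
    t - ledrappierYoungDim f a b p =
      relEntropy p (boxWeight f a b s t) / crossEntropy p b +
        (1 - crossEntropy p (a ∘ f) / crossEntropy p b) *
          (relEntropy (FunOnFinite.linearMap ℝ ℝ f p) (fun u => a u ^ s) /
            crossEntropy p (a ∘ f)) := by
  rw [ledrappierYoungDim, relEntropy_eq_crossEntropy_sub_entropy (boxWeight_pos ha hb),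
    relEntropy_eq_crossEntropy_sub_entropy fun u => rpow_pos_of_pos (ha u) s,
    crossEntropy_boxWeight p ha hb, crossEntropy_rpow _ ha, crossEntropy_linearMap]
  field_simp
  ring

lemma relEntropy_boxWeight_div_le (ha : ∀ u, a u ∈ Set.Ioo 0 1) (hb : ∀ v, 0 < b v)
    (hba : b ≤ a ∘ f) (hs : ∑ u, a u ^ s = 1) (hp : p ∈ stdSimplex ℝ ι) :
    relEntropy p (boxWeight f a b s t) / crossEntropy p b ≤ t - ledrappierYoungDim f a b p := by
  have hχ₁ : 0 < crossEntropy p (a ∘ f) := crossEntropy_pos hp fun v => ha (f v)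
  have hχ : crossEntropy p (a ∘ f) ≤ crossEntropy p b := crossEntropy_le_crossEntropy hp.1 hb hba
  have hχ₂ : 0 < crossEntropy p b := hχ₁.trans_le hχ
  have hcoeff : 0 ≤ 1 - crossEntropy p (a ∘ f) / crossEntropy p b :=
    sub_nonneg.2 ((div_le_one hχ₂).2 hχ)
  have hfp := linearMap_mem_stdSimplex f hp
  have hD₁ : 0 ≤ relEntropy (FunOnFinite.linearMap ℝ ℝ f p) (fun u => a u ^ s) :=
    relEntropy_nonneg hfp.1 (fun u => rpow_pos_of_pos (ha u).1 s) (hfp.2.trans hs.symm)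
  rw [sub_ledrappierYoungDim (s := s) (fun u => (ha u).1) hb hχ₁.ne' hχ₂.ne',
    le_add_iff_nonneg_right]
  positivity

lemma ledrappierYoungDim_le (ha : ∀ u, a u ∈ Set.Ioo 0 1) (hb : ∀ v, 0 < b v) (hba : b ≤ a ∘ f)
    (hs : ∑ u, a u ^ s = 1) (ht : ∑ v, boxWeight f a b s t v = 1) (hp : p ∈ stdSimplex ℝ ι) :
    ledrappierYoungDim f a b p ≤ t := by
  have hχ₂ : 0 < crossEntropy p b :=
    crossEntropy_pos hp fun v => ⟨hb v, (hba v).trans_lt (ha (f v)).2⟩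
  have hD₂ : 0 ≤ relEntropy p (boxWeight f a b s t) :=
    relEntropy_nonneg hp.1 (boxWeight_pos (fun u => (ha u).1) hb) (hp.2.trans ht.symm)
  exact sub_nonneg.1 <|
    (div_nonneg hD₂ hχ₂.le).trans (relEntropy_boxWeight_div_le ha hb hba hs hp)

lemma eq_boxWeight_of_ledrappierYoungDim_eq (ha : ∀ u, a u ∈ Set.Ioo 0 1) (hb : ∀ v, 0 < b v)
    (hba : b ≤ a ∘ f) (hs : ∑ u, a u ^ s = 1) (ht : ∑ v, boxWeight f a b s t v = 1)
    (hp : p ∈ stdSimplex ℝ ι) (h : ledrappierYoungDim f a b p = t) : p = boxWeight f a b s t := by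
  have hχ₂ : 0 < crossEntropy p b :=
    crossEntropy_pos hp fun v => ⟨hb v, (hba v).trans_lt (ha (f v)).2⟩
  have hpos : ∀ v, 0 < boxWeight f a b s t v := boxWeight_pos (fun u => (ha u).1) hb
  have hsum : ∑ v, p v = ∑ v, boxWeight f a b s t v := hp.2.trans ht.symm
  have hD₂ := relEntropy_boxWeight_div_le (t := t) ha hb hba hs hp
  rw [h, sub_self, div_le_iff₀ hχ₂, zero_mul] at hD₂
  exact (relEntropy_eq_zero_iff hp.1 hpos hsum).1 (hD₂.antisymm (relEntropy_nonneg hp.1 hpos hsum))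

lemma ledrappierYoungDim_boxWeight_eq_iff (ha : ∀ u, a u ∈ Set.Ioo 0 1) (hb : ∀ v, 0 < b v)
    (hba : b < a ∘ f) (hs : ∑ u, a u ^ s = 1) (ht : ∑ v, boxWeight f a b s t v = 1) :
    ledrappierYoungDim f a b (boxWeight f a b s t) = t ↔
      FunOnFinite.linearMap ℝ ℝ f (boxWeight f a b s t) = fun u => a u ^ s := by
  have hpos : ∀ v, 0 < boxWeight f a b s t v := boxWeight_pos (fun u => (ha u).1) hb
  set p := boxWeight f a b s t
  have hp : p ∈ stdSimplex ℝ ι := ⟨fun v => (hpos v).le, ht⟩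
  have hχ₁ : 0 < crossEntropy p (a ∘ f) := crossEntropy_pos hp fun v => ha (f v)
  have hχ : crossEntropy p (a ∘ f) < crossEntropy p b := crossEntropy_lt_crossEntropy hpos hb hba
  have hχ₂ : 0 < crossEntropy p b := hχ₁.trans hχ
  have hcoeff : 1 - crossEntropy p (a ∘ f) / crossEntropy p b ≠ 0 :=
    (sub_pos.2 ((div_lt_one hχ₂).2 hχ)).ne'
  have hfp := linearMap_mem_stdSimplex f hp
  have hD₂ : relEntropy p p = 0 := (relEntropy_eq_zero_iff hp.1 hpos rfl).2 rfl
  rw [eq_comm, ← sub_eq_zero,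
    sub_ledrappierYoungDim (s := s) (fun u => (ha u).1) hb hχ₁.ne' hχ₂.ne',
    ← relEntropy_eq_zero_iff hfp.1 (fun u => rpow_pos_of_pos (ha u).1 s) (hfp.2.trans hs.symm)]
  simp [p, hD₂, hcoeff, hχ₁.ne']

theorem hausdorff_eq_box_iff_uniform_fibres_general [DecidableEq κ]
    (ha : ∀ u, a u ∈ Set.Ioo 0 1) (hb : ∀ v, 0 < b v) (hba : b < a ∘ f)
    (hs : ∑ u, a u ^ s = 1) (ht : ∑ v, boxWeight f a b s t v = 1) :
    sSup (ledrappierYoungDim f a b '' stdSimplex ℝ ι) = t ↔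
      ∀ u, ∑ v with f v = u, b v ^ (t - s) = 1 := by
  have hw : boxWeight f a b s t ∈ stdSimplex ℝ ι :=
    ⟨fun v => (boxWeight_pos (fun u => (ha u).1) hb v).le, ht⟩
  calc
    sSup (ledrappierYoungDim f a b '' stdSimplex ℝ ι) = t
      ↔ ∃ p ∈ stdSimplex ℝ ι, ledrappierYoungDim f a b p = t :=
        sSup_image_eq_iff_exists_eq (isCompact_stdSimplex ℝ ι) ⟨_, hw⟩
          (continuousOn_ledrappierYoungDim ha fun v => ⟨hb v, (hba.le v).trans_lt (ha (f v)).2⟩)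
          fun _ => ledrappierYoungDim_le ha hb hba.le hs ht
    _ ↔ ledrappierYoungDim f a b (boxWeight f a b s t) = t :=
        ⟨fun ⟨_, hp, h⟩ => eq_boxWeight_of_ledrappierYoungDim_eq ha hb hba.le hs ht hp h ▸ h,
          fun h => ⟨_, hw, h⟩⟩
    _ ↔ FunOnFinite.linearMap ℝ ℝ f (boxWeight f a b s t) = fun u => a u ^ s :=
        ledrappierYoungDim_boxWeight_eq_iff ha hb hba hs ht
    _ ↔ ∀ u, ∑ v with f v = u, b v ^ (t - s) = 1 :=
        linearMap_boxWeight_eq_iff fun u => (ha u).1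

end LedrappierYoung

section GatzourasLalley

variable {Nf : List ℕ → ℕ} {lam : List ℕ → ℝ} {n : ℕ}

lemma length_of_mem_glIdx {i : List ℕ} (hi : i ∈ glIdx Nf n) : i.length = n := by
  induction n generalizing i with
  | zero => simp_all [glIdx]
  | succ n ih =>
    simp only [glIdx, mem_biUnion, mem_image] at hi
    obtain ⟨u, hu, j, -, rfl⟩ := hi
    simp [ih hu]

lemma take_eq_self_of_mem_glIdx {i : List ℕ} (hi : i ∈ glIdx Nf n) : i.take n = i :=
  List.take_of_length_le (length_of_mem_glIdx hi).le

lemma take_mem_glIdx {i : List ℕ} (hi : i ∈ glIdx Nf (n + 1)) : i.take n ∈ glIdx Nf n := by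
  simp only [glIdx, mem_biUnion, mem_image] at hi
  obtain ⟨u, hu, j, -, rfl⟩ := hi
  rwa [List.take_left' (length_of_mem_glIdx hu)]

/-- The projection `I₂ → I₁` forgetting the second coordinate, which sends a rectangle to its
column. -/
def glColumn (Nf : List ℕ → ℕ) (v : glIdx Nf 2) : glIdx Nf 1 :=
  ⟨v.1.take 1, take_mem_glIdx v.2⟩

lemma glEnt_eq_entropy (I : Finset (List ℕ)) (p : List ℕ → ℝ) :
    glEnt I p = entropy fun i : I => p i := by
  simp only [glEnt, entropy, negMulLog, neg_mul, sum_neg_distrib,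
    sum_coe_sort I fun i => p i * log (p i)]

lemma glLyap_eq_crossEntropy (I : Finset (List ℕ)) (ℓ : ℕ) (p : List ℕ → ℝ) :
    glLyap lam I ℓ p = crossEntropy (fun i : I => p i) fun i => lam (i.1.take ℓ) := by
  rw [glLyap, crossEntropy, sum_coe_sort I fun i => p i * log (lam (i.take ℓ))]

lemma sum_filter_take_eq_sum_glColumn (g : List ℕ → ℝ) (u : glIdx Nf 1) :
    ∑ v ∈ (glIdx Nf 2).filter (fun v => v.take 1 = u.1), g v = ∑ v with glColumn Nf v = u, g v := by
  simp only [sum_filter, glColumn, Subtype.ext_iff]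
  exact (sum_coe_sort (glIdx Nf 2) fun v => if v.take 1 = u then g v else 0).symm

lemma glMarg_eq_linearMap (p : List ℕ → ℝ) :
    (fun u : glIdx Nf 1 => glMarg Nf p u) =
      FunOnFinite.linearMap ℝ ℝ (glColumn Nf) fun v : glIdx Nf 2 => p v := by
  funext u
  rw [glMarg, sum_filter_take_eq_sum_glColumn, FunOnFinite.linearMap_apply_apply]

lemma isProbVec_iff_mem_stdSimplex (I : Finset (List ℕ)) (p : List ℕ → ℝ) :
    IsProbVec I p ↔ (fun i : I => p i) ∈ stdSimplex ℝ I := by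
  rw [IsProbVec, stdSimplex, Set.mem_ofPred_eq, sum_coe_sort I p, Subtype.forall]

lemma glVariational_eq_ledrappierYoungDim (p : List ℕ → ℝ) :
    glEnt (glIdx Nf 2) p / glLyap lam (glIdx Nf 2) 2 p +
          (1 - glLyap lam (glIdx Nf 2) 1 p / glLyap lam (glIdx Nf 2) 2 p) *
            (glEnt (glIdx Nf 1) (glMarg Nf p) /
              glLyap lam (glIdx Nf 1) 1 (glMarg Nf p)) =
      ledrappierYoungDim (glColumn Nf) (fun u => lam u) (fun v => lam v) fun v => p v := by
  simp only [glEnt_eq_entropy, glLyap_eq_crossEntropy, glMarg_eq_linearMap,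
    take_eq_self_of_mem_glIdx (Subtype.prop _)]
  rfl

lemma setOf_glVariational_eq_image (Nf : List ℕ → ℕ) (lam : List ℕ → ℝ) :
    {x : ℝ | ∃ p : List ℕ → ℝ, IsProbVec (glIdx Nf 2) p ∧
        x = glEnt (glIdx Nf 2) p / glLyap lam (glIdx Nf 2) 2 p +
          (1 - glLyap lam (glIdx Nf 2) 1 p / glLyap lam (glIdx Nf 2) 2 p) *
            (glEnt (glIdx Nf 1) (glMarg Nf p) /
              glLyap lam (glIdx Nf 1) 1 (glMarg Nf p))} =
      ledrappierYoungDim (glColumn Nf) (fun u => lam u) (fun v => lam v) ''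
        stdSimplex ℝ (glIdx Nf 2) := by
  have hrestrict : Function.Surjective fun (p : List ℕ → ℝ) (v : glIdx Nf 2) => p v :=
    Subtype.val_injective.surjective_comp_right
  ext x
  simp only [glVariational_eq_ledrappierYoungDim, isProbVec_iff_mem_stdSimplex, Set.mem_ofPred_eq,
    Set.mem_image, hrestrict.exists, eq_comm (a := x)]

variable {s : ℕ → ℝ}

lemma sum_glIdx_one_eq (hs0 : s 0 = 0) :
    ∑ i ∈ glIdx Nf 1, ∏ ℓ ∈ Finset.Icc 1 1, lam (i.take ℓ) ^ (s ℓ - s (ℓ - 1)) =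
      ∑ u : glIdx Nf 1, lam u ^ s 1 := by
  rw [← sum_coe_sort]
  simp [hs0, take_eq_self_of_mem_glIdx (Subtype.prop _)]

lemma sum_glIdx_two_eq (hs0 : s 0 = 0) :
    ∑ i ∈ glIdx Nf 2, ∏ ℓ ∈ Finset.Icc 1 2, lam (i.take ℓ) ^ (s ℓ - s (ℓ - 1)) =
      ∑ v, boxWeight (glColumn Nf) (fun u => lam u) (fun v => lam v) (s 1) (s 2) v := by
  rw [← sum_coe_sort]
  simp [hs0, prod_Icc_succ_top, take_eq_self_of_mem_glIdx (Subtype.prop _), boxWeight, glColumn]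

lemma lam_lt_lam_comp_glColumn (hne : (glIdx Nf 2).Nonempty)
    (horder : ∀ i ∈ glIdx Nf 2, lam (i.take 2) < lam (i.take 1)) :
    (fun v : glIdx Nf 2 => lam v) < (fun u : glIdx Nf 1 => lam u) ∘ glColumn Nf := by
  have := hne.to_subtype
  refine lt_of_strongLT fun v => ?_
  have hv := horder v v.2
  rwa [take_eq_self_of_mem_glIdx v.2] at hv

end GatzourasLalley

/-- For `d = 2` GL carpets (with the coordinate ordering condition),
the Gatzouras–Lalley variational formula for the Hausdorff dimension equals the box
dimension `s_2` if and only if the uniform fibre condition holds. -/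
theorem hausdorff_eq_box_iff_uniform_fibres
    (Nf : List ℕ → ℕ) (hN : 2 ≤ Nf [])
    (hNf : ∀ n < 2, ∀ u ∈ glIdx Nf n, 1 ≤ Nf u)
    (lam : List ℕ → ℝ)
    (hlam : ∀ n, 1 ≤ n → n ≤ 2 → ∀ i ∈ glIdx Nf n, lam i ∈ Set.Ioo (0:ℝ) 1)
    (horder : ∀ i ∈ glIdx Nf 2, lam (i.take 2) < lam (i.take 1))
    (s : ℕ → ℝ) (hs0 : s 0 = 0)
    (hs : ∀ n, 1 ≤ n → n ≤ 2 →
      ∑ i ∈ glIdx Nf n, ∏ ℓ ∈ Finset.Icc 1 n, lam (i.take ℓ) ^ (s ℓ - s (ℓ - 1)) = 1) :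
    sSup {x : ℝ | ∃ p : List ℕ → ℝ, IsProbVec (glIdx Nf 2) p ∧
        x = glEnt (glIdx Nf 2) p / glLyap lam (glIdx Nf 2) 2 p +
          (1 - glLyap lam (glIdx Nf 2) 1 p / glLyap lam (glIdx Nf 2) 2 p) *
            (glEnt (glIdx Nf 1) (glMarg Nf p) /
              glLyap lam (glIdx Nf 1) 1 (glMarg Nf p))} = s 2 ↔
      ∀ u ∈ glIdx Nf 1,
        ∑ v ∈ (glIdx Nf 2).filter (fun v => v.take 1 = u), lam v ^ (s 2 - s 1) = 1 := by
  have hne : (glIdx Nf 2).Nonempty := nonempty_of_sum_ne_zero (hs 2 one_le_two le_rfl ▸ one_ne_zero)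
  have hs₁ : ∑ u : glIdx Nf 1, lam u ^ s 1 = 1 :=
    (sum_glIdx_one_eq hs0).symm.trans (hs 1 le_rfl one_le_two)
  have hs₂ : ∑ v, boxWeight (glColumn Nf) (fun u => lam u) (fun v => lam v) (s 1) (s 2) v = 1 :=
    (sum_glIdx_two_eq hs0).symm.trans (hs 2 one_le_two le_rfl)
  have ha (u : glIdx Nf 1) : lam u ∈ Set.Ioo 0 1 := hlam 1 le_rfl one_le_two u u.2
  have hb (v : glIdx Nf 2) : 0 < lam v := (hlam 2 one_le_two le_rfl v v.2).1
  rw [setOf_glVariational_eq_image, hausdorff_eq_box_iff_uniform_fibres_general ha hb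
    (lam_lt_lam_comp_glColumn hne horder) hs₁ hs₂]
  simp only [← sum_filter_take_eq_sum_glColumn fun v => lam v ^ (s 2 - s 1), Subtype.forall]
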